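/- Gronwall-type lemma: let g : [0,∞) → ℝ be a differentiable nonnegative function, and suppose there exist positive constants C₁, C₂, C₃ such that g'(t) ≤ −C₁ g(t) + C₂ g(t)^{3/2} + C₃ g(t)³ for all t > 0. Then there exist positive constants C_in and C_out, depending only on C₁, C₂, C₃, such that if g(0) < C_in, then g(t) ≤ C_out e^{−C₁ t} for all t ≥ 0. -/

import Mathlib

open Real

/-- Gronwall-type lemma.  The constants `Cin, Cout` depend only on
`C₁, C₂, C₃`, hence are quantified before the function `g`. -/
theorem stmt_19 (C₁ C₂ C₃ : ℝ) (hC₁ : 0 < C₁) (hC₂ : 0 < C₂) (hC₃ : 0 < C₃) :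
    ∃ Cin Cout : ℝ, 0 < Cin ∧ 0 < Cout ∧
      ∀ g : ℝ → ℝ,
        (∀ t, 0 ≤ t → 0 ≤ g t) →
        (∀ t, 0 ≤ t → DifferentiableAt ℝ g t) →
        (∀ t > (0:ℝ), deriv g t ≤ -C₁ * g t + C₂ * g t ^ ((3:ℝ) / 2) + C₃ * g t ^ 3) →
        g 0 < Cin →
        ∀ t ≥ (0:ℝ), g t ≤ Cout * Real.exp (-C₁ * t) := by
  obtain ⟨d, hd0, hd1, hd⟩ : ∃ d : ℝ, 0 < d ∧ d ≤ 1 ∧ C₂ * d + C₃ * d < C₁ / 4 := by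
    refine ⟨C₁ / (8 * (C₁ + C₂ + C₃)), by positivity, ?_, ?_⟩
    · rw [div_le_one (by positivity)]; linarith
    · rw [← add_mul, mul_div_assoc', div_lt_iff₀ (by positivity)]
      nlinarith [mul_pos hC₁ hC₁, mul_pos hC₁ hC₂, mul_pos hC₁ hC₃]
  refine ⟨d ^ 2 / 2, d ^ 2, by positivity, by positivity, ?_⟩
  intro g hg hdiff hder h0 t ht
  have hs : ∀ x : ℝ, HasDerivAt (fun x => exp (-C₁ / 2 * x))
      (exp (-C₁ / 2 * x) * (-C₁ / 2)) x := by
    intro x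
    have := ((hasDerivAt_id x).const_mul (-C₁ / 2)).exp
    simpa using this
  set s : ℝ → ℝ := fun x => exp (-C₁ / 2 * x) with hsdef
  have hspos : ∀ x, 0 < s x := fun x => exp_pos _
  have hs1 : ∀ x, 0 ≤ x → s x ≤ 1 := by
    intro x hx
    apply exp_le_one_iff.2
    nlinarith
  have hB : ∀ x, HasDerivAt (fun x => d ^ 2 / 2 * (s x ^ 2 * (2 - s x)))
      (-C₁ * (d ^ 2 / 2 * (s x ^ 2 * (2 - s x))) + d ^ 2 * C₁ / 4 * s x ^ 3) x := by
    intro x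
    have := (((hs x).pow 2).mul ((hs x).const_sub 2)).const_mul (d ^ 2 / 2)
    refine this.congr_deriv ?_
    simp only [hsdef, Pi.pow_apply]
    push_cast
    ring
  have key : g t ≤ d ^ 2 / 2 * (s t ^ 2 * (2 - s t)) := by
    refine image_le_of_deriv_right_lt_deriv_boundary (f := g) (f' := deriv g) (a := 0) (b := t)
      (fun x hx => (hdiff x hx.1).continuousAt.continuousWithinAt)
      (fun x hx => (hdiff x hx.1).hasDerivAt.hasDerivWithinAt) ?_ hB ?_ ⟨ht, le_rfl⟩
    · simp only [hsdef, mul_zero, exp_zero]; linarith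
    · intro x hx hgx
      rcases hx.1.eq_or_lt with rfl | hx0
      · simp only [hsdef, mul_zero, exp_zero] at hgx; linarith
      · have h1 := hder x hx0
        have hp := hspos x
        have hle := hs1 x hx0.le
        have hu : g x ≤ (d * s x) ^ 2 := by
          rw [hgx]
          nlinarith [mul_pos (pow_pos hd0 2) (pow_pos hp 3)]
        have h2 : g x ^ ((3:ℝ) / 2) ≤ (d * s x) ^ 3 := by
          calc g x ^ ((3:ℝ) / 2) ≤ ((d * s x) ^ 2) ^ ((3:ℝ) / 2) :=
                rpow_le_rpow (hg x hx0.le) hu (by norm_num)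
            _ = (d * s x) ^ 3 := by
                rw [← rpow_natCast, ← rpow_natCast, ← rpow_mul (by positivity)]
                norm_num
        have h3 : g x ^ 3 ≤ (d * s x) ^ 3 := by
          apply pow_le_pow_left₀ (hg x hx0.le)
          refine hu.trans ?_
          have : d * s x ≤ 1 := mul_le_one₀ hd1 hp.le hle
          have : 0 < d * s x := by positivity
          nlinarith
        have h4 : (C₂ * d + C₃ * d) * (d ^ 2 * s x ^ 3) < C₁ / 4 * (d ^ 2 * s x ^ 3) :=
          mul_lt_mul_of_pos_right hd (by positivity)
        have h5 := mul_le_mul_of_nonneg_left h2 hC₂.le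
        have h6 := mul_le_mul_of_nonneg_left h3 hC₃.le
        rw [← hgx]
        nlinarith
  have hsq : exp (-C₁ * t) = s t ^ 2 := by
    simp only [hsdef]
    rw [← exp_nat_mul]
    congr 1
    push_cast
    ring
  rw [hsq]
  refine key.trans ?_
  nlinarith [mul_pos (pow_pos hd0 2) (pow_pos (hspos t) 3)]
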